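/- arXiv:1909.07923 — 2 statements merged into one kernel-verified Lean document; each statement's English description precedes it below -/
import Mathlib

section
/- (Asgeirsson's first theorem.) Let r : ℝ⁴ → ℝ be twice continuously differentiable and satisfy the ultrahyperbolic equation (∂²_{ξ₁ξ₁} − ∂²_{ξ₂ξ₂} − ∂²_{ξ₃ξ₃} + ∂²_{ξ₄ξ₄}) r = 0 on all of ℝ⁴. Then for every (ξ₁, ξ₂, ξ₃, ξ₄) ∈ ℝ⁴ and every R ≥ 0, ∫₀^{2π} r(ξ₁ + R cos θ, ξ₂, ξ₃, ξ₄ + R sin θ) dθ = ∫₀^{2π} r(ξ₁, ξ₂ + R cos θ, ξ₃ + R sin θ, ξ₄) dθ; that is, the integral of r over the circle of radius R centered at the point in the (ξ₁, ξ₄)-plane equals the integral over the circle of the same radius in the (ξ₂, ξ₃)-plane. -/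
open Real MeasureTheory intervalIntegral

namespace Asg

/-- Continuous partial derivatives. -/
structure PD (f fa fb : ℝ → ℝ → ℝ) : Prop where
  c : Continuous (fun p : ℝ × ℝ => f p.1 p.2)
  ca : Continuous (fun p : ℝ × ℝ => fa p.1 p.2)
  cb : Continuous (fun p : ℝ × ℝ => fb p.1 p.2)
  da : ∀ a b, HasDerivAt (fun t => f t b) (fa a b) a
  db : ∀ a b, HasDerivAt (fun t => f a t) (fb a b) b

lemma PD.chain {f fa fb : ℝ → ℝ → ℝ} (h : PD f fa fb) {x y : ℝ → ℝ} {x' y' t : ℝ}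
    (hx : HasDerivAt x x' t) (hy : HasDerivAt y y' t) :
    HasDerivAt (fun t => f (x t) (y t)) (fa (x t) (y t) * x' + fb (x t) (y t) * y') t := by
  have key := hasStrictFDerivAt_uncurry_coprod (𝕜 := ℝ) (u := (x t, y t)) (f := f)
    (f₁ := fun a b => ContinuousLinearMap.toSpanSingleton ℝ (fa a b))
    (f₂ := fun a b => ContinuousLinearMap.toSpanSingleton ℝ (fb a b))
    (Filter.Eventually.of_forall fun v => (h.da v.1 v.2).hasFDerivAt)
    (Filter.Eventually.of_forall fun v => (h.db v.1 v.2).hasFDerivAt)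
    (((ContinuousLinearMap.toSpanSingletonCLE (𝕜 := ℝ) (E := ℝ)).continuous.comp
      h.ca).continuousAt)
    (((ContinuousLinearMap.toSpanSingletonCLE (𝕜 := ℝ) (E := ℝ)).continuous.comp
      h.cb).continuousAt)
  have h2 := key.hasFDerivAt.comp_hasDerivAt t (hx.prodMk hy)
  refine h2.congr_deriv ?_
  symm
  change _ = x' • fa (x t) (y t) + y' • fb (x t) (y t)
  simp [mul_comm]

lemma hasDerivAt_int {f f' : ℝ → ℝ → ℝ} (A B : ℝ)
    (hf : Continuous (fun p : ℝ × ℝ => f p.1 p.2))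
    (hf' : Continuous (fun p : ℝ × ℝ => f' p.1 p.2))
    (hd : ∀ x t, HasDerivAt (fun x => f x t) (f' x t) x) (x₀ : ℝ) :
    HasDerivAt (fun x => ∫ t in A..B, f x t) (∫ t in A..B, f' x₀ t) x₀ := by
  have hc : IsCompact (Metric.closedBall x₀ 1 ×ˢ Set.uIcc A B) :=
    (isCompact_closedBall _ _).prod isCompact_uIcc
  obtain ⟨C, hC⟩ := hc.exists_bound_of_continuousOn hf'.continuousOn
  refine (intervalIntegral.hasDerivAt_integral_of_dominated_loc_of_deriv_le (μ := volume) (bound := fun _ => C)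
    (F := f) (F' := f') (Metric.closedBall_mem_nhds x₀ one_pos) ?_ ?_ ?_ ?_ ?_ ?_).2
  · exact Filter.Eventually.of_forall fun x =>
      (show Continuous (f x) by fun_prop).aestronglyMeasurable
  · exact (show Continuous (f x₀) by fun_prop).intervalIntegrable _ _
  · exact (show Continuous (f' x₀) by fun_prop).aestronglyMeasurable
  · exact Filter.Eventually.of_forall fun t ht x hx =>
      hC (x, t) ⟨hx, Set.uIoc_subset_uIcc ht⟩
  · exact intervalIntegrable_const
  · exact Filter.Eventually.of_forall fun t ht x hx => hd x t

/-- double integral over the torus -/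
noncomputable def I (G : ℝ → ℝ → ℝ) : ℝ := ∫ θ in (0:ℝ)..(2 * π), ∫ φ in (0:ℝ)..(2 * π), G θ φ

lemma cont_inner {X : Type*} [TopologicalSpace X] [FirstCountableTopology X] {G : X → ℝ → ℝ}
    (hG : Continuous (fun p : X × ℝ => G p.1 p.2)) :
    Continuous (fun x => ∫ φ in (0:ℝ)..(2 * π), G x φ) :=
  continuous_parametric_intervalIntegral_of_continuous' hG _ _

lemma cont_I {X : Type*} [TopologicalSpace X] [FirstCountableTopology X] {G : X → ℝ → ℝ → ℝ}
    (hG : Continuous (fun p : X × ℝ × ℝ => G p.1 p.2.1 p.2.2)) :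
    Continuous (fun x => I (G x)) := by
  unfold I
  refine cont_inner (G := fun x θ => ∫ φ in (0:ℝ)..(2 * π), G x θ φ) ?_
  refine cont_inner (X := X × ℝ) (G := fun x φ => G x.1 x.2 φ) ?_
  exact hG.comp (by fun_prop : Continuous fun p : (X × ℝ) × ℝ => (p.1.1, p.1.2, p.2))

lemma I_add {G H : ℝ → ℝ → ℝ} (hG : Continuous (fun p : ℝ × ℝ => G p.1 p.2))
    (hH : Continuous (fun p : ℝ × ℝ => H p.1 p.2)) :
    I (fun θ φ => G θ φ + H θ φ) = I G + I H := by
  unfold I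
  rw [← intervalIntegral.integral_add ((cont_inner hG).intervalIntegrable _ _)
    ((cont_inner hH).intervalIntegrable _ _)]
  congr 1; ext θ
  beta_reduce
  rw [← intervalIntegral.integral_add]
  · exact (show Continuous (G θ) by fun_prop).intervalIntegrable _ _
  · exact (show Continuous (H θ) by fun_prop).intervalIntegrable _ _

lemma I_mul (c : ℝ) (G : ℝ → ℝ → ℝ) : I (fun θ φ => c * G θ φ) = c * I G := by
  simp [I]

lemma hasDerivAt_I {G G' : ℝ → ℝ → ℝ → ℝ}
    (hG : Continuous (fun p : ℝ × ℝ × ℝ => G p.1 p.2.1 p.2.2))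
    (hG' : Continuous (fun p : ℝ × ℝ × ℝ => G' p.1 p.2.1 p.2.2))
    (hd : ∀ x θ φ, HasDerivAt (fun x => G x θ φ) (G' x θ φ) x) (x₀ : ℝ) :
    HasDerivAt (fun x => I (G x)) (I (G' x₀)) x₀ := by
  unfold I
  refine hasDerivAt_int (f := fun x θ => ∫ φ in (0:ℝ)..(2 * π), G x θ φ)
    (f' := fun x θ => ∫ φ in (0:ℝ)..(2 * π), G' x θ φ) _ _ ?_ ?_ ?_ x₀
  · refine cont_inner (X := ℝ × ℝ) (G := fun x φ => G x.1 x.2 φ) ?_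
    exact hG.comp (by fun_prop : Continuous fun p : (ℝ × ℝ) × ℝ => (p.1.1, p.1.2, p.2))
  · refine cont_inner (X := ℝ × ℝ) (G := fun x φ => G' x.1 x.2 φ) ?_
    exact hG'.comp (by fun_prop : Continuous fun p : (ℝ × ℝ) × ℝ => (p.1.1, p.1.2, p.2))
  · intro x θ
    refine hasDerivAt_int (f := fun x φ => G x θ φ) (f' := fun x φ => G' x θ φ) _ _ ?_ ?_ ?_ x
    · exact hG.comp (by fun_prop : Continuous fun p : ℝ × ℝ => (p.1, θ, p.2))
    · exact hG'.comp (by fun_prop : Continuous fun p : ℝ × ℝ => (p.1, θ, p.2))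
    · exact fun x t => hd x θ t

lemma I_zero1 {G G' : ℝ → ℝ → ℝ} (hG : Continuous (fun p : ℝ × ℝ => G p.1 p.2))
    (hG' : Continuous (fun p : ℝ × ℝ => G' p.1 p.2))
    (hd : ∀ x t, HasDerivAt (fun x => G x t) (G' x t) x) (h0 : ∀ φ, G 0 φ = G (2 * π) φ) :
    I G' = 0 := by
  unfold I
  rw [integral_eq_sub_of_hasDerivAt (fun x _ => hasDerivAt_int _ _ hG hG' hd x)
    ((cont_inner hG').intervalIntegrable _ _)]
  simp [h0]

lemma I_zero2 {G G' : ℝ → ℝ → ℝ} 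
    (hG' : Continuous (fun p : ℝ × ℝ => G' p.1 p.2))
    (hd : ∀ x t, HasDerivAt (fun t => G x t) (G' x t) t) (h0 : ∀ θ, G θ 0 = G θ (2 * π)) :
    I G' = 0 := by
  unfold I
  have : ∀ θ, ∫ φ in (0:ℝ)..(2 * π), G' θ φ = 0 := fun θ => by
    rw [integral_eq_sub_of_hasDerivAt (fun x _ => hd θ x)
      ((show Continuous (G' θ) by fun_prop).intervalIntegrable _ _)]
    simp [h0]
  simp [this]

/-- Energy argument. -/
lemma energy {u ua ub uaa uab ubb : ℝ → ℝ → ℝ} (h : PD u ua ub) (h1 : PD ua uaa uab)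
    (h2 : PD ub uab ubb)
    (epd : ∀ a b, a * b * uaa a b + b * ua a b = a * b * ubb a b + a * ub a b)
    (hdiag : ∀ a, u a a = 0) (R : ℝ) (hR : 0 ≤ R) : u R 0 = 0 := by
  have hsum : ∀ a, ua a a + ub a a = 0 := by
    intro a
    have := h.chain (hasDerivAt_id a) (hasDerivAt_id a)
    simp only [id, hdiag, mul_one] at this
    exact this.unique (hasDerivAt_const a 0)
  have c1 := h.ca
  have c2 := h.cb
  have c3 := h1.ca
  have c4 := h1.cb
  have c5 := h2.cb
  have cc : ∀ {f : ℝ → ℝ → ℝ}, Continuous (fun p : ℝ × ℝ => f p.1 p.2) →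
      Continuous (fun p : ℝ × ℝ => f p.1 (p.1 * p.2)) := fun hf =>
    hf.comp (by fun_prop : Continuous fun p : ℝ × ℝ => (p.1, p.1 * p.2))
  have c1 := cc c1
  have c2 := cc c2
  have c3 := cc c3
  have c4 := cc c4
  have c5 := cc c5
  set e : ℝ → ℝ → ℝ := fun a s => a ^ 2 * s * (ua a (a * s) ^ 2 + ub a (a * s) ^ 2) with he
  set e' : ℝ → ℝ → ℝ := fun a s => 2 * a * s * (ua a (a * s) ^ 2 + ub a (a * s) ^ 2) +
    a ^ 2 * s * (2 * ua a (a * s) * (uaa a (a * s) + uab a (a * s) * s) +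
      2 * ub a (a * s) * (uab a (a * s) + ubb a (a * s) * s)) with he'
  set w : ℝ → ℝ → ℝ := fun a s => a * s ^ 2 * (ua a (a * s) ^ 2 + ub a (a * s) ^ 2) +
    2 * a * s * (ua a (a * s) * ub a (a * s)) with hw
  have ce : Continuous (fun p : ℝ × ℝ => e p.1 p.2) := by simp only [he]; fun_prop
  have ce' : Continuous (fun p : ℝ × ℝ => e' p.1 p.2) := by simp only [he']; fun_prop
  have hE : ∀ a, HasDerivAt (fun a => ∫ s in (0:ℝ)..1, e a s) (∫ s in (0:ℝ)..1, e' a s) a := by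
    refine hasDerivAt_int 0 1 ce ce' ?_
    intro a s
    have hx := hasDerivAt_id a
    have hy : HasDerivAt (fun a => a * s) s a := by simpa using (hasDerivAt_id a).mul_const s
    have k1 := h1.chain hx hy
    have k2 := h2.chain hx hy
    have := (((hasDerivAt_id a).pow 2).mul_const s).mul ((k1.pow 2).add (k2.pow 2))
    refine this.congr_deriv ?_
    simp only [he', id, Pi.add_apply, Pi.pow_apply]
    push_cast
    ring
  have cw : ∀ a, Continuous fun s => e' a s + 2 * a * s * ua a (a * s) ^ 2 := fun a => by
    have i : Continuous fun s : ℝ => (a, s) := by fun_prop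
    have j1 := ce'.comp i
    have j2 := c1.comp i
    simp only [Function.comp_def] at j1 j2
    fun_prop
  have hw' : ∀ a s, HasDerivAt (fun s => w a s) (e' a s + 2 * a * s * ua a (a * s) ^ 2) s := by
    intro a s
    have hy : HasDerivAt (fun s => a * s) a s := by simpa using (hasDerivAt_id s).const_mul a
    have k1 := h1.chain (hasDerivAt_const s a) hy
    have k2 := h2.chain (hasDerivAt_const s a) hy
    have := ((((hasDerivAt_id s).pow 2).const_mul a).mul ((k1.pow 2).add (k2.pow 2))).add
      (((hasDerivAt_id s).const_mul (2 * a)).mul (k1.mul k2))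
    refine this.congr_deriv ?_
    simp only [he', id, Pi.add_apply, Pi.pow_apply, Pi.mul_apply]
    push_cast
    linear_combination (-2 * ua a (a * s)) * epd a (a * s)
  have hle : ∀ a, 0 ≤ a → ∫ s in (0:ℝ)..1, e' a s ≤ 0 := by
    intro a ha
    have k := integral_eq_sub_of_hasDerivAt (fun s _ => hw' a s)
      ((cw a).intervalIntegrable 0 1)
    have k0 : w a 1 - w a 0 = 0 := by
      simp only [hw, mul_one]
      linear_combination a * (ua a a + ub a a) * hsum a
    rw [k0] at k
    refine le_of_le_of_eq ?_ k
    refine intervalIntegral.integral_mono_on (μ := volume) zero_le_one ?_ ((cw a).intervalIntegrable 0 1) ?_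
    · exact (ce'.comp (by fun_prop : Continuous fun s : ℝ => (a, s))).intervalIntegrable _ _
    · intro s hs
      have : 0 ≤ 2 * a * s * ua a (a * s) ^ 2 := by have := hs.1; positivity
      linarith
  rcases hR.eq_or_lt with rfl | hR
  · exact hdiag 0
  have hanti : AntitoneOn (fun a => ∫ s in (0:ℝ)..1, e a s) (Set.Ici 0) := by
    refine antitoneOn_of_deriv_nonpos (convex_Ici 0)
      (fun a _ => (hE a).continuousAt.continuousWithinAt)
      (fun a _ => (hE a).differentiableAt.differentiableWithinAt) ?_
    intro a ha
    rw [interior_Ici] at ha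
    rw [(hE a).deriv]
    exact hle a (le_of_lt ha)
  have hER : ∫ s in (0:ℝ)..1, e R s ≤ 0 := by
    have := hanti (Set.mem_Ici.2 le_rfl) (Set.mem_Ici.2 hR.le) hR.le
    simpa [he] using this
  have hub : ∀ s ∈ Set.Icc (0:ℝ) 1, e R s = 0 := by
    intro s hs
    by_contra hne
    have hpos : ∀ s, 0 ≤ s → 0 ≤ e R s := fun s hs => by simp only [he]; positivity
    have := intervalIntegral.integral_pos (zero_lt_one' ℝ)
      ((ce.comp (by fun_prop : Continuous fun s : ℝ => (R, s))).continuousOn)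
      (fun s hs => hpos s hs.1.le) ⟨s, hs, lt_of_le_of_ne (hpos s hs.1) (Ne.symm hne)⟩
    exact absurd hER (not_le.2 this)
  have hv : ∀ s ∈ Set.Ioo (0:ℝ) R, ub R s = 0 := by
    intro s hs
    have := hub (s / R) ⟨div_nonneg hs.1.le hR.le, (div_le_one hR).2 hs.2.le⟩
    simp only [he, mul_div_cancel₀ s hR.ne'] at this
    have hp : 0 < R ^ 2 * (s / R) := mul_pos (by positivity) (div_pos hs.1 hR)
    have := (mul_eq_zero.1 this).resolve_left hp.ne'
    nlinarith [sq_nonneg (ua R s), sq_nonneg (ub R s)]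
  obtain ⟨c, hc, hc'⟩ := exists_hasDerivAt_eq_slope (fun s => u R s) (fun s => ub R s) hR
    (fun s _ => (h.db R s).continuousAt.continuousWithinAt) (fun s _ => h.db R s)
  rw [hv c hc, hdiag, eq_comm, div_eq_zero_iff] at hc'
  rcases hc' with hc' | hc' <;> linarith

section kernel
variable {E : Type*} [NormedAddCommGroup E] [NormedSpace ℝ E]

/-- circle in the plane spanned by v, w -/
noncomputable def circ (v w : E) (θ : ℝ) : E := cos θ • v + sin θ • w

/-- its derivative -/
noncomputable def circ' (v w : E) (θ : ℝ) : E := (-sin θ) • v + cos θ • w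

lemma cont_circ (v w : E) : Continuous (circ v w) := by unfold circ; fun_prop
lemma cont_circ' (v w : E) : Continuous (circ' v w) := by unfold circ'; fun_prop

lemma d_circ (v w : E) (θ : ℝ) : HasDerivAt (circ v w) (circ' v w θ) θ :=
  ((hasDerivAt_cos θ).smul_const v).add ((hasDerivAt_sin θ).smul_const w)

lemma d_circ' (v w : E) (θ : ℝ) : HasDerivAt (circ' v w) (-circ v w θ) θ := by
  refine (((hasDerivAt_sin θ).neg.smul_const v).add
    ((hasDerivAt_cos θ).smul_const w)).congr_deriv ?_
  simp only [circ]; module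

lemma circ_sum (B : E →L[ℝ] E →L[ℝ] ℝ) (v w : E) (θ : ℝ) :
    B (circ v w θ) (circ v w θ) + B (circ' v w θ) (circ' v w θ) = B v v + B w w := by
  simp only [circ, circ', map_add, map_smul, add_apply,
    smul_apply, smul_eq_mul]
  linear_combination (B v v + B w w) * (sin_sq_add_cos_sq θ)


lemma F_d0 {F : E → ℝ} (hF : ContDiff ℝ 2 F) (p : E) : HasFDerivAt F (fderiv ℝ F p) p :=
  (hF.differentiable (by norm_num) p).hasFDerivAt

lemma F_c1 {F : E → ℝ} (hF : ContDiff ℝ 2 F) : ContDiff ℝ 1 (fderiv ℝ F) := hF.fderiv_right (by norm_num)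

lemma F_d1 {F : E → ℝ} (hF : ContDiff ℝ 2 F) (p : E) : HasFDerivAt (fderiv ℝ F) (fderiv ℝ (fderiv ℝ F) p) p :=
  ((F_c1 hF).differentiable (by norm_num) p).hasFDerivAt

lemma F_c2 {F : E → ℝ} (hF : ContDiff ℝ 2 F) : Continuous (fderiv ℝ (fderiv ℝ F)) := (F_c1 hF).continuous_fderiv (by norm_num)

lemma line0 {F : E → ℝ} (hF : ContDiff ℝ 2 F) {γ : ℝ → E} {v : E} {t : ℝ} (hγ : HasDerivAt γ v t) :
    HasDerivAt (fun t => F (γ t)) (fderiv ℝ F (γ t) v) t :=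
  (F_d0 hF (γ t)).comp_hasDerivAt t hγ

lemma line1 {F : E → ℝ} (hF : ContDiff ℝ 2 F) {γ δ : ℝ → E} {v w : E} {t : ℝ} (hγ : HasDerivAt γ v t) (hδ : HasDerivAt δ w t) :
    HasDerivAt (fun t => fderiv ℝ F (γ t) (δ t))
      (fderiv ℝ (fderiv ℝ F) (γ t) v (δ t) + fderiv ℝ F (γ t) w) t :=
  ((F_d1 hF (γ t)).comp_hasDerivAt t hγ).clm_apply hδ

lemma line2 {F : E → ℝ} (hF : ContDiff ℝ 2 F) {γ : ℝ → E} {v : E} (hγ : ∀ t, HasDerivAt γ v t) (t : ℝ) :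
    deriv (fun t => deriv (fun s => F (γ s)) t) t = fderiv ℝ (fderiv ℝ F) (γ t) v v := by
  have : (fun t => deriv (fun s => F (γ s)) t) = fun t => fderiv ℝ F (γ t) v := by
    ext t; exact (line0 hF (hγ t)).deriv
  rw [this, (line1 hF (hγ t) (hasDerivAt_const t v)).deriv]
  simp

lemma symm2 {F : E → ℝ} (hF : ContDiff ℝ 2 F) (p v w : E) : fderiv ℝ (fderiv ℝ F) p v w = fderiv ℝ (fderiv ℝ F) p w v :=
  (hF.contDiffAt.isSymmSndFDerivAt (by simp)) v w

lemma main {F : E → ℝ} (hF : ContDiff ℝ 2 F) (ξ v1 v2 v3 v4 : E)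
    (hu : ∀ p, fderiv ℝ (fderiv ℝ F) p v1 v1 + fderiv ℝ (fderiv ℝ F) p v4 v4 =
      fderiv ℝ (fderiv ℝ F) p v2 v2 + fderiv ℝ (fderiv ℝ F) p v3 v3) (R : ℝ) (hR : 0 ≤ R) :
    ∫ θ in (0:ℝ)..(2 * π), F (ξ + R • circ v1 v4 θ)
      = ∫ θ in (0:ℝ)..(2 * π), F (ξ + R • circ v2 v3 θ) := by
  set P : ℝ → ℝ → ℝ → ℝ → E := fun a b θ φ => ξ + a • circ v1 v4 θ + b • circ v2 v3 φ with hP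
  have q1 := cont_circ v1 v4
  have q2 := cont_circ v2 v3
  have q3 := cont_circ' v1 v4
  have q4 := cont_circ' v2 v3
  have cP : Continuous fun x : (ℝ × ℝ) × ℝ × ℝ => P x.1.1 x.1.2 x.2.1 x.2.2 := by
    simp only [hP]; fun_prop
  have f0 : Continuous F := hF.continuous
  have f1 : Continuous (fderiv ℝ F) := (F_c1 hF).continuous
  have f2 := F_c2 hF
  set D := fderiv ℝ F with hD
  set H := fderiv ℝ D with hH
  -- kernels
  set K : ℝ × ℝ → ℝ → ℝ → ℝ := fun x θ φ => F (P x.1 x.2 θ φ) with hK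
  set Ka : ℝ × ℝ → ℝ → ℝ → ℝ := fun x θ φ => D (P x.1 x.2 θ φ) (circ v1 v4 θ) with hKa
  set Kb : ℝ × ℝ → ℝ → ℝ → ℝ := fun x θ φ => D (P x.1 x.2 θ φ) (circ v2 v3 φ) with hKb
  set Kaa : ℝ × ℝ → ℝ → ℝ → ℝ := fun x θ φ =>
    H (P x.1 x.2 θ φ) (circ v1 v4 θ) (circ v1 v4 θ) with hKaa
  set Kab : ℝ × ℝ → ℝ → ℝ → ℝ := fun x θ φ =>
    H (P x.1 x.2 θ φ) (circ v1 v4 θ) (circ v2 v3 φ) with hKab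
  set Kbb : ℝ × ℝ → ℝ → ℝ → ℝ := fun x θ φ =>
    H (P x.1 x.2 θ φ) (circ v2 v3 φ) (circ v2 v3 φ) with hKbb
  set Kl : ℝ × ℝ → ℝ → ℝ → ℝ := fun x θ φ =>
    H (P x.1 x.2 θ φ) v1 v1 + H (P x.1 x.2 θ φ) v4 v4 with hKl
  set Ta : ℝ × ℝ → ℝ → ℝ → ℝ := fun x θ φ => D (P x.1 x.2 θ φ) (circ' v1 v4 θ) with hTa
  set Tb : ℝ × ℝ → ℝ → ℝ → ℝ := fun x θ φ => D (P x.1 x.2 θ φ) (circ' v2 v3 φ) with hTb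
  have cK : Continuous fun x : (ℝ × ℝ) × ℝ × ℝ => K x.1 x.2.1 x.2.2 := by
    simp only [hK]; fun_prop
  have cKa : Continuous fun x : (ℝ × ℝ) × ℝ × ℝ => Ka x.1 x.2.1 x.2.2 := by
    simp only [hKa]; fun_prop
  have cKb : Continuous fun x : (ℝ × ℝ) × ℝ × ℝ => Kb x.1 x.2.1 x.2.2 := by
    simp only [hKb]; fun_prop
  have cKaa : Continuous fun x : (ℝ × ℝ) × ℝ × ℝ => Kaa x.1 x.2.1 x.2.2 := by
    simp only [hKaa]; fun_prop
  have cKab : Continuous fun x : (ℝ × ℝ) × ℝ × ℝ => Kab x.1 x.2.1 x.2.2 := by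
    simp only [hKab]; fun_prop
  have cKbb : Continuous fun x : (ℝ × ℝ) × ℝ × ℝ => Kbb x.1 x.2.1 x.2.2 := by
    simp only [hKbb]; fun_prop
  have cKl : Continuous fun x : (ℝ × ℝ) × ℝ × ℝ => Kl x.1 x.2.1 x.2.2 := by
    simp only [hKl]; fun_prop
  have cTa : Continuous fun x : (ℝ × ℝ) × ℝ × ℝ => Ta x.1 x.2.1 x.2.2 := by
    simp only [hTa]; fun_prop
  have cTb : Continuous fun x : (ℝ × ℝ) × ℝ × ℝ => Tb x.1 x.2.1 x.2.2 := by
    simp only [hTb]; fun_prop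
  have Pa : ∀ a b θ φ, HasDerivAt (fun t => P t b θ φ) (circ v1 v4 θ) a := fun a b θ φ => by
    simpa [hP] using (((hasDerivAt_id a).smul_const (circ v1 v4 θ)).const_add ξ).add_const
      (b • circ v2 v3 φ)
  have Pb : ∀ a b θ φ, HasDerivAt (fun t => P a t θ φ) (circ v2 v3 φ) b := fun a b θ φ => by
    simpa [hP] using ((hasDerivAt_id b).smul_const (circ v2 v3 φ)).const_add (ξ + a • circ v1 v4 θ)
  have Pt : ∀ a b θ φ, HasDerivAt (fun t => P a b t φ) (a • circ' v1 v4 θ) θ := fun a b θ φ => by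
    simpa [hP] using (((d_circ v1 v4 θ).const_smul a).const_add ξ).add_const (b • circ v2 v3 φ)
  have Pp : ∀ a b θ φ, HasDerivAt (fun t => P a b θ t) (b • circ' v2 v3 φ) φ := fun a b θ φ => by
    simpa [hP] using ((d_circ v2 v3 φ).const_smul b).const_add (ξ + a • circ v1 v4 θ)
  have mk : ∀ {G Ga Gb : ℝ × ℝ → ℝ → ℝ → ℝ},
      (Continuous fun x : (ℝ × ℝ) × ℝ × ℝ => G x.1 x.2.1 x.2.2) →
      (Continuous fun x : (ℝ × ℝ) × ℝ × ℝ => Ga x.1 x.2.1 x.2.2) →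
      (Continuous fun x : (ℝ × ℝ) × ℝ × ℝ => Gb x.1 x.2.1 x.2.2) →
      (∀ a b θ φ, HasDerivAt (fun t => G (t, b) θ φ) (Ga (a, b) θ φ) a) →
      (∀ a b θ φ, HasDerivAt (fun t => G (a, t) θ φ) (Gb (a, b) θ φ) b) →
      PD (fun a b => I (G (a, b))) (fun a b => I (Ga (a, b))) (fun a b => I (Gb (a, b))) := by
    intro G Ga Gb cG cGa cGb dGa dGb
    refine ⟨cont_I cG, cont_I cGa, cont_I cGb, fun a b => ?_, fun a b => ?_⟩
    · exact hasDerivAt_I (G := fun t => G (t, b)) (G' := fun t => Ga (t, b))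
        (cG.comp (by fun_prop : Continuous fun p : ℝ × ℝ × ℝ => ((p.1, b), p.2.1, p.2.2)))
        (cGa.comp (by fun_prop : Continuous fun p : ℝ × ℝ × ℝ => ((p.1, b), p.2.1, p.2.2)))
        (fun t θ φ => dGa t b θ φ) a
    · exact hasDerivAt_I (G := fun t => G (a, t)) (G' := fun t => Gb (a, t))
        (cG.comp (by fun_prop : Continuous fun p : ℝ × ℝ × ℝ => ((a, p.1), p.2.1, p.2.2)))
        (cGb.comp (by fun_prop : Continuous fun p : ℝ × ℝ × ℝ => ((a, p.1), p.2.1, p.2.2)))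
        (fun t θ φ => dGb a t θ φ) b
  have M0 := mk cK cKa cKb (fun a b θ φ => line0 hF (Pa a b θ φ))
    (fun a b θ φ => line0 hF (Pb a b θ φ))
  have M1 := mk cKa cKaa cKab
    (fun a b θ φ => by simpa using line1 hF (Pa a b θ φ) (hasDerivAt_const a (circ v1 v4 θ)))
    (fun a b θ φ => by
      have := line1 hF (Pb a b θ φ) (hasDerivAt_const b (circ v1 v4 θ))
      rw [symm2 hF] at this
      simpa using this)
  have M2 := mk cKb cKab cKbb
    (fun a b θ φ => by simpa using line1 hF (Pa a b θ φ) (hasDerivAt_const a (circ v2 v3 φ)))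
    (fun a b θ φ => by simpa using line1 hF (Pb a b θ φ) (hasDerivAt_const b (circ v2 v3 φ)))
  have fix : ∀ {G : ℝ × ℝ → ℝ → ℝ → ℝ} (x : ℝ × ℝ),
      (Continuous fun x : (ℝ × ℝ) × ℝ × ℝ => G x.1 x.2.1 x.2.2) →
      Continuous fun p : ℝ × ℝ => G x p.1 p.2 := fun x hG =>
    hG.comp (by fun_prop : Continuous fun p : ℝ × ℝ => (x, p.1, p.2))
  have per : ∀ v w : E, circ v w 0 = circ v w (2 * π) ∧ circ' v w 0 = circ' v w (2 * π) := by
    intro v w; simp [circ, circ']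
  have comb : ∀ (c : ℝ) (x : ℝ × ℝ) {A B : ℝ × ℝ → ℝ → ℝ → ℝ},
      (Continuous fun x : (ℝ × ℝ) × ℝ × ℝ => A x.1 x.2.1 x.2.2) →
      (Continuous fun x : (ℝ × ℝ) × ℝ × ℝ => B x.1 x.2.1 x.2.2) →
      I (fun θ φ => c * Kl x θ φ + (-c * A x θ φ + -1 * B x θ φ)) =
        c * I (Kl x) + (-c * I (A x) + -1 * I (B x)) := by
    intro c x A B hA hB
    have z1 := fix x hA
    have z2 := fix x hB
    have z3 := fix x cKl
    rw [I_add (G := fun θ φ => c * Kl x θ φ) (H := fun θ φ => -c * A x θ φ + -1 * B x θ φ)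
      (by fun_prop) (by fun_prop), I_add (G := fun θ φ => -c * A x θ φ)
      (H := fun θ φ => -1 * B x θ φ) (by fun_prop) (by fun_prop), I_mul, I_mul, I_mul]
  have ea : ∀ a b, a * I (Kaa (a, b)) + I (Ka (a, b)) = a * I (Kl (a, b)) := by
    intro a b
    have z1 := fix (a, b) cKaa
    have z2 := fix (a, b) cKa
    have z3 := fix (a, b) cKl
    have := I_zero1 (G := Ta (a, b))
      (G' := fun θ φ => a * Kl (a, b) θ φ + (-a * Kaa (a, b) θ φ + -1 * Ka (a, b) θ φ))
      (fix (a, b) cTa) (by fun_prop) (fun θ φ => by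
        refine (line1 hF (Pt a b θ φ) (d_circ' v1 v4 θ)).congr_deriv ?_
        have := circ_sum (H (P a b θ φ)) v1 v4 θ
        simp only [hKl, hKaa, hKa, ← hD, ← hH, map_smul, map_neg,
          smul_apply, smul_eq_mul]
        linear_combination a * this)
      (fun φ => by simp only [hTa, hP, (per v1 v4).1, (per v1 v4).2])
    rw [comb a (a, b) cKaa cKa] at this
    linarith
  have eb : ∀ a b, b * I (Kbb (a, b)) + I (Kb (a, b)) = b * I (Kl (a, b)) := by
    intro a b
    have z1 := fix (a, b) cKbb
    have z2 := fix (a, b) cKb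
    have z3 := fix (a, b) cKl
    have := I_zero2 (G := Tb (a, b))
      (G' := fun θ φ => b * Kl (a, b) θ φ + (-b * Kbb (a, b) θ φ + -1 * Kb (a, b) θ φ))
      (by fun_prop) (fun θ φ => by
        refine (line1 hF (Pp a b θ φ) (d_circ' v2 v3 φ)).congr_deriv ?_
        have := circ_sum (H (P a b θ φ)) v2 v3 φ
        have h' := hu (P a b θ φ)
        simp only [hKl, hKbb, hKb, ← hD, ← hH, map_smul, map_neg,
          smul_apply, smul_eq_mul]
        linear_combination b * this - b * h')
      (fun φ => by simp only [hTb, hP, (per v2 v3).1, (per v2 v3).2])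
    rw [comb b (a, b) cKbb cKb] at this
    linarith
  have sw : ∀ {f fa fb g ga gb : ℝ → ℝ → ℝ}, PD f fa fb → PD g ga gb →
      PD (fun a b => f a b - g b a) (fun a b => fa a b - gb b a) (fun a b => fb a b - ga b a) := by
    intro f fa fb g ga gb hf hg
    have s : Continuous fun p : ℝ × ℝ => (p.2, p.1) := by fun_prop
    exact ⟨hf.c.sub (hg.c.comp s), hf.ca.sub (hg.cb.comp s), hf.cb.sub (hg.ca.comp s),
      fun a b => (hf.da a b).sub (hg.db b a), fun a b => (hf.db a b).sub (hg.da b a)⟩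
  have fin := energy (sw M0 M0) (sw M1 M2) (sw M2 M1) (fun a b => by
    linear_combination b * ea a b - a * eb a b + a * ea b a - b * eb b a)
    (fun a => sub_self _) R hR
  have hpi := pi_pos
  simp only [I, hK, hP, zero_smul, add_zero, intervalIntegral.integral_const, sub_zero,
    smul_eq_mul, intervalIntegral.integral_const_mul] at fin
  have : 2 * π ≠ 0 := by positivity
  exact mul_left_cancel₀ this (sub_eq_zero.1 fin)

end kernel

end Asg

/-- Asgeirsson's first theorem: if `r : ℝ⁴ → ℝ` is C² and satisfies the
ultrahyperbolic equation on all of `ℝ⁴`, then for every point and every radius `R ≥ 0`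
the mean of `r` over the circle of radius `R` in the `(ξ₁,ξ₄)`-plane equals the mean
over the circle of the same radius in the `(ξ₂,ξ₃)`-plane. -/
theorem asgeirsson_first
    (r : ℝ → ℝ → ℝ → ℝ → ℝ)
    (hr : ContDiff ℝ 2 (fun p : ℝ × ℝ × ℝ × ℝ => r p.1 p.2.1 p.2.2.1 p.2.2.2))
    (huh : ∀ ξ₁ ξ₂ ξ₃ ξ₄ : ℝ,
      deriv (fun t => deriv (fun s => r s ξ₂ ξ₃ ξ₄) t) ξ₁
        - deriv (fun t => deriv (fun s => r ξ₁ s ξ₃ ξ₄) t) ξ₂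
        - deriv (fun t => deriv (fun s => r ξ₁ ξ₂ s ξ₄) t) ξ₃
        + deriv (fun t => deriv (fun s => r ξ₁ ξ₂ ξ₃ s) t) ξ₄ = 0) :
    ∀ (ξ₁ ξ₂ ξ₃ ξ₄ R : ℝ), 0 ≤ R →
      (∫ θ in (0:ℝ)..(2 * π), r (ξ₁ + R * cos θ) ξ₂ ξ₃ (ξ₄ + R * sin θ))
        = ∫ θ in (0:ℝ)..(2 * π), r ξ₁ (ξ₂ + R * cos θ) (ξ₃ + R * sin θ) ξ₄ := by
  intro ξ₁ ξ₂ ξ₃ ξ₄ R hR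
  set F : ℝ × ℝ × ℝ × ℝ → ℝ := fun p => r p.1 p.2.1 p.2.2.1 p.2.2.2 with hFdef
  have hu : ∀ p : ℝ × ℝ × ℝ × ℝ,
      fderiv ℝ (fderiv ℝ F) p (1, 0, 0, 0) (1, 0, 0, 0)
        + fderiv ℝ (fderiv ℝ F) p (0, 0, 0, 1) (0, 0, 0, 1) =
      fderiv ℝ (fderiv ℝ F) p (0, 1, 0, 0) (0, 1, 0, 0)
        + fderiv ℝ (fderiv ℝ F) p (0, 0, 1, 0) (0, 0, 1, 0) := by
    rintro ⟨x, y, z, w⟩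
    have k1 := Asg.line2 hr (γ := fun s => (s, y, z, w)) (v := (1, 0, 0, 0)) (fun t =>
      (hasDerivAt_id t).prodMk (hasDerivAt_const t (y, z, w))) x
    have k2 := Asg.line2 hr (γ := fun s => (x, s, z, w)) (v := (0, 1, 0, 0)) (fun t =>
      (hasDerivAt_const t x).prodMk ((hasDerivAt_id t).prodMk (hasDerivAt_const t (z, w)))) y
    have k3 := Asg.line2 hr (γ := fun s => (x, y, s, w)) (v := (0, 0, 1, 0)) (fun t =>
      (hasDerivAt_const t x).prodMk ((hasDerivAt_const t y).prodMk
        ((hasDerivAt_id t).prodMk (hasDerivAt_const t w)))) z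
    have k4 := Asg.line2 hr (γ := fun s => (x, y, z, s)) (v := (0, 0, 0, 1)) (fun t =>
      (hasDerivAt_const t x).prodMk ((hasDerivAt_const t y).prodMk
        ((hasDerivAt_const t z).prodMk (hasDerivAt_id t)))) w
    have h := huh x y z w
    simp only [hFdef] at k1 k2 k3 k4 ⊢
    rw [k1, k2, k3, k4] at h
    linarith
  have key := Asg.main hr (ξ₁, ξ₂, ξ₃, ξ₄) _ _ _ _ hu R hR
  simpa [Asg.circ, hFdef] using key
end

section
/- (Asgeirsson's second theorem.) Let r : ℝ⁴ → ℝ be twice continuously differentiable and satisfy the ultrahyperbolic equation (∂²_{ξ₁ξ₁} − ∂²_{ξ₂ξ₂} − ∂²_{ξ₃ξ₃} + ∂²_{ξ₄ξ₄}) r = 0 on all of ℝ⁴. Then for every (ξ₁, ξ₂, ξ₃, ξ₄) ∈ ℝ⁴ and all R₁, R₂ ≥ 0, ∫₀^{2π} ∫₀^{2π} r(ξ₁ + R₁ cos θ₁, ξ₂ + R₂ cos θ₂, ξ₃ + R₂ sin θ₂, ξ₄ + R₁ sin θ₁) dθ₁ dθ₂ = ∫₀^{2π} ∫₀^{2π}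 r(ξ₁ + R₂ cos θ₁, ξ₂ + R₁ cos θ₂, ξ₃ + R₁ sin θ₂, ξ₄ + R₂ sin θ₁) dθ₁ dθ₂; that is, the double integral over the pair of circles of radii (R₁, R₂) in the (ξ₁,ξ₄)- and (ξ₂,ξ₃)-planes equals the double integral with the two radii interchanged. -/
open Real MeasureTheory intervalIntegral

theorem par_hasFDerivAt {E : Type*} [NormedAddCommGroup E] [NormedSpace ℝ E] [ProperSpace E]
    (k : E × ℝ → ℝ) (hk : ContDiff ℝ 1 k) (a b : ℝ) (x : E) :
    HasFDerivAt (fun x => ∫ t in a..b, k (x, t))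
      (∫ t in a..b, (fderiv ℝ k (x, t)).comp (ContinuousLinearMap.inl ℝ E ℝ)) x := by
  have hc : Continuous (fun z : E × ℝ => (fderiv ℝ k z).comp (ContinuousLinearMap.inl ℝ E ℝ)) :=
    (hk.continuous_fderiv (by norm_num)).clm_comp continuous_const
  obtain ⟨C, hC⟩ := ((isCompact_closedBall x 1).prod (isCompact_uIcc (a := a) (b := b))).exists_bound_of_continuousOn
    hc.continuousOn
  have hkc := hk.continuous
  refine intervalIntegral.hasFDerivAt_integral_of_dominated_of_fderiv_le
    (F' := fun x t => (fderiv ℝ k (x, t)).comp (ContinuousLinearMap.inl ℝ E ℝ))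
    (s := Metric.closedBall x 1) (bound := fun _ => C)
    (Metric.closedBall_mem_nhds x one_pos) ?_ ?_ ?_ ?_ ?_ ?_
  · refine Filter.Eventually.of_forall fun y => ?_
    exact (hkc.comp (by fun_prop : Continuous fun t : ℝ => (y, t))).aestronglyMeasurable
  · exact (hkc.comp (by fun_prop : Continuous fun t : ℝ => (x, t))).intervalIntegrable _ _
  · exact (hc.comp (by fun_prop : Continuous fun t : ℝ => (x, t))).aestronglyMeasurable
  · refine Filter.Eventually.of_forall fun t ht y hy => hC (y, t) ⟨hy, Set.uIoc_subset_uIcc ht⟩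
  · exact continuous_const.intervalIntegrable _ _
  · refine Filter.Eventually.of_forall fun t ht y hy => ?_
    have h1 := (hk.differentiable (by norm_num) (y, t)).hasFDerivAt
    exact h1.comp y (hasFDerivAt_prodMk_left y t)

theorem par_fderiv {E : Type*} [NormedAddCommGroup E] [NormedSpace ℝ E] [ProperSpace E]
    (k : E × ℝ → ℝ) (hk : ContDiff ℝ 1 k) (a b : ℝ) (x v : E) :
    fderiv ℝ (fun x => ∫ t in a..b, k (x, t)) x v = ∫ t in a..b, fderiv ℝ k (x, t) (v, 0) := by
  have hc : Continuous (fun z : E × ℝ => (fderiv ℝ k z).comp (ContinuousLinearMap.inl ℝ E ℝ)) :=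
    (hk.continuous_fderiv (by norm_num)).clm_comp continuous_const
  rw [(par_hasFDerivAt k hk a b x).fderiv, ContinuousLinearMap.intervalIntegral_apply]
  · simp
  · exact (hc.comp (by fun_prop : Continuous fun t : ℝ => (x, t))).intervalIntegrable _ _

theorem par_contDiff_one {E : Type*} [NormedAddCommGroup E] [NormedSpace ℝ E] [ProperSpace E]
    (k : E × ℝ → ℝ) (hk : ContDiff ℝ 1 k) (a b : ℝ) :
    ContDiff ℝ 1 (fun x => ∫ t in a..b, k (x, t)) := by
  rw [contDiff_one_iff_fderiv]
  refine ⟨fun x => (par_hasFDerivAt k hk a b x).differentiableAt, ?_⟩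
  have hc : Continuous (fun z : E × ℝ => (fderiv ℝ k z).comp (ContinuousLinearMap.inl ℝ E ℝ)) :=
    (hk.continuous_fderiv (by norm_num)).clm_comp continuous_const
  rw [funext (fun x => (par_hasFDerivAt k hk a b x).fderiv)]
  exact continuous_parametric_intervalIntegral_of_continuous'
    (f := fun x t => (fderiv ℝ k (x, t)).comp (ContinuousLinearMap.inl ℝ E ℝ)) hc a b

theorem fd_contDiff {E : Type*} [NormedAddCommGroup E] [NormedSpace ℝ E]
    (k : E → ℝ) (hk : ContDiff ℝ 2 k) (v : E) : ContDiff ℝ 1 (fun x => fderiv ℝ k x v) :=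
  (hk.fderiv_right (m := 1) (by norm_num)).clm_apply contDiff_const

theorem par_contDiff_two {E : Type*} [NormedAddCommGroup E] [NormedSpace ℝ E]
    [FiniteDimensional ℝ E] [ProperSpace E]
    (k : E × ℝ → ℝ) (hk : ContDiff ℝ 2 k) (a b : ℝ) :
    ContDiff ℝ 2 (fun x => ∫ t in a..b, k (x, t)) := by
  have hk1 : ContDiff ℝ 1 k := hk.of_le (by norm_num)
  rw [show (2 : WithTop ℕ∞) = 1 + 1 by norm_num, contDiff_succ_iff_fderiv_apply]
  refine ⟨fun x => (par_hasFDerivAt k hk1 a b x).differentiableAt, by simp, fun v => ?_⟩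
  simp only [par_fderiv k hk1]
  exact par_contDiff_one (fun z => fderiv ℝ k z (v, 0)) (fd_contDiff k hk _) a b

/-- integrated polar Laplacian identity -/
theorem circ {V : Type*} [NormedAddCommGroup V] [NormedSpace ℝ V]
    (f : V → ℝ) (hf : ContDiff ℝ 2 f) (a u v : V) (ρ : ℝ) :
    ρ * (∫ t in (0:ℝ)..(2*π), fderiv ℝ (fderiv ℝ f) (a + ρ • (cos t • u + sin t • v))
        (cos t • u + sin t • v) (cos t • u + sin t • v))
      + (∫ t in (0:ℝ)..(2*π), fderiv ℝ f (a + ρ • (cos t • u + sin t • v))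
        (cos t • u + sin t • v))
    = ρ * ∫ t in (0:ℝ)..(2*π),
        (fderiv ℝ (fderiv ℝ f) (a + ρ • (cos t • u + sin t • v)) u u
        + fderiv ℝ (fderiv ℝ f) (a + ρ • (cos t • u + sin t • v)) v v) := by
  have h1 : ContDiff ℝ 1 (fderiv ℝ f) := hf.fderiv_right (by norm_num)
  have hc1 := h1.continuous
  have hc2 : Continuous (fderiv ℝ (fderiv ℝ f)) := h1.continuous_fderiv (by norm_num)
  have hX : Continuous fun t : ℝ => a + ρ • (cos t • u + sin t • v) := by fun_prop
  have hB : ∀ t, HasDerivAt (fun t => fderiv ℝ f (a + ρ • (cos t • u + sin t • v))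
        (-sin t • u + cos t • v))
      (fderiv ℝ (fderiv ℝ f) (a + ρ • (cos t • u + sin t • v)) (ρ • (-sin t • u + cos t • v))
        (-sin t • u + cos t • v) +
        fderiv ℝ f (a + ρ • (cos t • u + sin t • v)) (-cos t • u + -sin t • v)) t := by
    intro t
    have hx : HasDerivAt (fun t : ℝ => a + ρ • (cos t • u + sin t • v))
        (ρ • (-sin t • u + cos t • v)) t :=
      ((((hasDerivAt_cos t).smul_const u).add ((hasDerivAt_sin t).smul_const v)).const_smul ρ).const_add a
    have hy : HasDerivAt (fun t : ℝ => -sin t • u + cos t • v)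
        (-cos t • u + -sin t • v) t :=
      (((hasDerivAt_sin t).neg.smul_const u).add ((hasDerivAt_cos t).smul_const v))
    have := ((h1.differentiable (by norm_num) _).hasFDerivAt.comp_hasDerivAt t hx).clm_apply hy
    exact this
  have hB0 := integral_eq_sub_of_hasDerivAt (a := 0) (b := 2*π) (fun t _ => hB t)
    (Continuous.intervalIntegrable (by fun_prop) _ _)
  simp only [sin_two_pi, cos_two_pi, sin_zero, cos_zero, sub_self] at hB0
  rw [← intervalIntegral.integral_const_mul, ← intervalIntegral.integral_const_mul,
    ← intervalIntegral.integral_add, ← sub_eq_zero, ← intervalIntegral.integral_sub]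
  · rw [← neg_eq_zero, ← hB0, ← intervalIntegral.integral_neg]
    congr 1; ext t
    simp only [map_add, map_smul, add_apply, smul_apply, smul_eq_mul, neg_smul, map_neg, neg_apply]
    have := sin_sq_add_cos_sq t
    generalize fderiv ℝ (fderiv ℝ f) (a + ρ • (cos t • u + sin t • v)) = Q
    linear_combination (-ρ * (Q u u + Q v v)) * this
  all_goals exact Continuous.intervalIntegrable (by fun_prop) _ _

theorem fd_split (p : ℝ × ℝ → ℝ) (z : ℝ × ℝ) (a b : ℝ) :
    fderiv ℝ p z (a, b) = a * fderiv ℝ p z (1, 0) + b * fderiv ℝ p z (0, 1) := by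
  have : ((a, b) : ℝ × ℝ) = a • (1, 0) + b • (0, 1) := by simp
  rw [this, map_add, map_smul, map_smul]; simp

theorem ray_one (p : ℝ × ℝ → ℝ) (hp : Differentiable ℝ p) (s τ : ℝ) :
    HasDerivAt (fun s => p (s, s * τ))
      (fderiv ℝ p (s, s * τ) (1, 0) + τ * fderiv ℝ p (s, s * τ) (0, 1)) s := by
  have h : HasDerivAt (fun s : ℝ => (s, s * τ)) (1, τ) s := by
    simpa using (hasDerivAt_id s).prodMk ((hasDerivAt_id s).mul_const τ)
  have := (hp (s, s * τ)).hasFDerivAt.comp_hasDerivAt s h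
  rw [fd_split] at this
  refine HasDerivAt.congr_deriv this ?_
  simp

theorem ray_two (p : ℝ × ℝ → ℝ) (hp : Differentiable ℝ p) (s τ : ℝ) :
    HasDerivAt (fun τ => p (s, s * τ)) (s * fderiv ℝ p (s, s * τ) (0, 1)) τ := by
  have h : HasDerivAt (fun τ : ℝ => (s, s * τ)) (0, s) τ := by
    simpa using (hasDerivAt_const τ s).prodMk ((hasDerivAt_id τ).const_mul s)
  have := (hp (s, s * τ)).hasFDerivAt.comp_hasDerivAt τ h
  rw [fd_split] at this
  refine HasDerivAt.congr_deriv this ?_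
  simp

theorem energy (w : ℝ × ℝ → ℝ) (hw : ContDiff ℝ 2 w) (hd : ∀ x, w (x, x) = 0)
    (hpde : ∀ x y, x * y * (fderiv ℝ (fun z => fderiv ℝ w z (1, 0)) (x, y) (1, 0)
        - fderiv ℝ (fun z => fderiv ℝ w z (0, 1)) (x, y) (0, 1))
      = x * fderiv ℝ w (x, y) (0, 1) - y * fderiv ℝ w (x, y) (1, 0)) :
    ∀ x y, 0 ≤ y → y ≤ x → w (x, y) = 0 := by
  obtain ⟨p, hpdef⟩ : ∃ p, p = fun z => fderiv ℝ w z (1, 0) := ⟨_, rfl⟩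
  obtain ⟨q, hqdef⟩ : ∃ q, q = fun z => fderiv ℝ w z (0, 1) := ⟨_, rfl⟩
  have hp : ContDiff ℝ 1 p := hpdef ▸ fd_contDiff w hw _
  have hq : ContDiff ℝ 1 q := hqdef ▸ fd_contDiff w hw _
  have hpd := hp.differentiable one_ne_zero
  have hqd := hq.differentiable one_ne_zero
  have hwd := hw.differentiable two_ne_zero
  have hpx : ∀ z, fderiv ℝ w z (1, 0) = p z := fun z => by rw [hpdef]
  have hqx : ∀ z, fderiv ℝ w z (0, 1) = q z := fun z => by rw [hqdef]
  have hfd : ∀ z, DifferentiableAt ℝ (fderiv ℝ w) z := fun z =>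
    (hw.fderiv_right (m := 1) (by norm_num)).differentiable one_ne_zero z
  have hsym : ∀ z, fderiv ℝ p z (0, 1) = fderiv ℝ q z (1, 0) := by
    intro z
    have h := (hw.contDiffAt (x := z)).isSymmSndFDerivAt (by simp)
    have := h.eq (0, 1) (1, 0)
    rw [hpdef, hqdef, fderiv_clm_apply (hfd z) (by fun_prop), fderiv_clm_apply (hfd z) (by fun_prop)]
    simpa using this
  simp only [hpx, hqx] at hpde
  have hpq : ∀ x, p (x, x) + q (x, x) = 0 := by
    intro x
    have h := ray_one w hwd x 1
    simp only [mul_one, hd, hpx, hqx, one_mul] at h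
    exact h.unique (hasDerivAt_const x 0)
  -- energy density
  obtain ⟨g, hg⟩ : ∃ g : ℝ × ℝ → ℝ, g = fun z =>
    z.1 ^ 2 * z.2 * (p (z.1, z.1 * z.2) ^ 2 + q (z.1, z.1 * z.2) ^ 2) := ⟨_, rfl⟩
  have hgc : ContDiff ℝ 1 g := by rw [hg]; fun_prop
  have hpc := hp.continuous
  have hqc := hq.continuous
  have hgd : ∀ s τ, fderiv ℝ g (s, τ) (1, 0) =
      2 * s * τ * (p (s, s * τ) ^ 2 + q (s, s * τ) ^ 2) + s ^ 2 * τ *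
       (2 * p (s, s * τ) * (fderiv ℝ p (s, s * τ) (1, 0) + τ * fderiv ℝ p (s, s * τ) (0, 1))
       + 2 * q (s, s * τ) * (fderiv ℝ q (s, s * τ) (1, 0) + τ * fderiv ℝ q (s, s * τ) (0, 1))) := by
    intro s τ
    have h : HasDerivAt (fun s : ℝ => (s, τ)) (1, 0) s :=
      (hasDerivAt_id s).prodMk (hasDerivAt_const s τ)
    have h1 := (hgc.differentiable one_ne_zero (s, τ)).hasFDerivAt.comp_hasDerivAt s h
    have h2 := ((((hasDerivAt_id s).pow 2).mul_const τ).mul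
      (((ray_one p hpd s τ).pow 2).add ((ray_one q hqd s τ).pow 2)))
    have h3 : (g ∘ fun s : ℝ => (s, τ)) = (fun s => (id s ^ 2 * τ) *
      (p (s, s * τ) ^ 2 + q (s, s * τ) ^ 2)) := by rw [hg]; rfl
    rw [h3] at h1
    rw [h1.unique h2]
    simp
  have hK : ∀ s τ, HasDerivAt (fun τ => s * τ ^ 2 * (p (s, s * τ) ^ 2 + q (s, s * τ) ^ 2)
      + 2 * s * τ * (p (s, s * τ) * q (s, s * τ)))
      (fderiv ℝ g (s, τ) (1, 0) + 2 * s * τ * p (s, s * τ) ^ 2) τ := by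
    intro s τ
    have h1 := ((((hasDerivAt_id τ).pow 2).const_mul s).mul
      (((ray_two p hpd s τ).pow 2).add ((ray_two q hqd s τ).pow 2))).add
      (((hasDerivAt_id τ).const_mul (2 * s)).mul ((ray_two p hpd s τ).mul (ray_two q hqd s τ)))
    refine h1.congr_deriv ?_
    rw [hgd]
    have := hpde s (s * τ)
    have h2 := hsym (s, s * τ)
    simp
    rw [h2] at *
    linear_combination (-2 * p (s, s * τ)) * this
  have hgcd : Continuous (fun z => fderiv ℝ g z (1, 0)) :=
    (hgc.continuous_fderiv one_ne_zero).clm_apply continuous_const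
  have hint : ∀ s, ∫ τ in (0:ℝ)..1, fderiv ℝ g (s, τ) (1, 0)
      = - ∫ τ in (0:ℝ)..1, 2 * s * τ * p (s, s * τ) ^ 2 := by
    intro s
    have h := integral_eq_sub_of_hasDerivAt (a := 0) (b := 1) (fun τ _ => hK s τ)
      (Continuous.intervalIntegrable (by fun_prop) _ _)
    rw [intervalIntegral.integral_add (Continuous.intervalIntegrable (by fun_prop) _ _)
      (Continuous.intervalIntegrable (by fun_prop) _ _)] at h
    have h2 := hpq s
    simp only [mul_one, mul_zero] at h
    linear_combination h + s * (p (s, s) + q (s, s)) * h2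
  have hE : ∀ s, HasDerivAt (fun s => ∫ τ in (0:ℝ)..1, g (s, τ))
      (- ∫ τ in (0:ℝ)..1, 2 * s * τ * p (s, s * τ) ^ 2) s := by
    intro s
    have h := (par_hasFDerivAt g hgc 0 1 s)
    have h2 := h.hasDerivAt
    rw [← h.fderiv, par_fderiv g hgc, hint] at h2
    exact h2
  have hanti : AntitoneOn (fun s => ∫ τ in (0:ℝ)..1, g (s, τ)) (Set.Ici 0) := by
    refine antitoneOn_of_deriv_nonpos (convex_Ici 0)
      (fun s _ => (hE s).continuousAt.continuousWithinAt)
      (fun s _ => (hE s).differentiableAt.differentiableWithinAt) ?_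
    intro s hs
    rw [interior_Ici] at hs
    rw [(hE s).deriv, neg_nonpos]
    refine intervalIntegral.integral_nonneg zero_le_one fun τ hτ => ?_
    have := hτ.1
    have : 0 < s := hs
    positivity
  have hg0 : ∀ s τ, 0 ≤ s → τ ∈ Set.Icc (0:ℝ) 1 → g (s, τ) = 0 := by
    intro s τ hs hτ
    have h1 : ∫ τ in (0:ℝ)..1, g (s, τ) ≤ 0 := by
      have := hanti (Set.mem_Ici.2 le_rfl) (Set.mem_Ici.2 hs) hs
      simpa [hg] using this
    have hnn : ∀ τ ∈ Set.Icc (0:ℝ) 1, 0 ≤ g (s, τ) := by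
      intro τ hτ
      have := hτ.1
      rw [hg]; dsimp only
      positivity
    by_contra hne
    have : 0 < ∫ τ in (0:ℝ)..1, g (s, τ) := by
      refine intervalIntegral.integral_pos one_pos ?_ (fun t ht => hnn t ⟨ht.1.le, ht.2⟩)
        ⟨τ, hτ, lt_of_le_of_ne (hnn τ hτ) (Ne.symm hne)⟩
      exact (hgc.continuous.comp (by fun_prop : Continuous fun t : ℝ => (s, t))).continuousOn
    linarith
  have hq0 : ∀ s τ, 0 ≤ s → τ ∈ Set.Ioo (0:ℝ) 1 → s * q (s, s * τ) = 0 := by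
    intro s τ hs hτ
    have h := hg0 s τ hs ⟨hτ.1.le, hτ.2.le⟩
    rw [hg] at h
    rcases eq_or_lt_of_le hs with h0 | h0
    · simp [← h0]
    · have h3 : s ^ 2 * τ ≠ 0 := by have := hτ.1; positivity
      have h4 := (mul_eq_zero.1 h).resolve_left h3
      have : q (s, s * τ) = 0 := by nlinarith [sq_nonneg (p (s, s * τ)), sq_nonneg (q (s, s * τ))]
      simp [this]
  have hfin : ∀ s τ, 0 ≤ s → τ ∈ Set.Icc (0:ℝ) 1 → w (s, s * τ) = 0 := by
    intro s τ hs hτ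
    have h := intervalIntegral.integral_eq_sub_of_hasDerivAt (a := τ) (b := 1)
      (fun t _ => ray_two w hwd s t) (by
        simp only [hqx]; exact Continuous.intervalIntegrable (by fun_prop) _ _)
    simp only [hqx, mul_one, hd] at h
    have h2 : ∫ t in τ..1, s * q (s, s * t) = ∫ t in τ..1, (0:ℝ) := by
      refine intervalIntegral.integral_congr_Ioo_of_le hτ.2 fun t ht => ?_
      exact hq0 s t hs ⟨lt_of_le_of_lt hτ.1 ht.1, ht.2⟩
    rw [h2] at h
    simp at h
    exact h
  intro x y hy hyx
  rcases eq_or_lt_of_le (hy.trans hyx) with h0 | h0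
  · have : y = x := by linarith
    rw [this, hd]
  · have := hfin x (y / x) h0.le ⟨by positivity, by rw [div_le_one h0]; exact hyx⟩
    rwa [mul_div_cancel₀ _ h0.ne'] at this

theorem fd_line {E : Type*} [NormedAddCommGroup E] [NormedSpace ℝ E] (g : E → ℝ) (y v : E)
    (hg : DifferentiableAt ℝ g y) (d : ℝ) (h : HasDerivAt (fun s : ℝ => g (y + s • v)) d 0) :
    fderiv ℝ g y v = d := by
  rw [← hg.lineDeriv_eq_fderiv]
  exact HasLineDerivAt.lineDeriv h

theorem swap_int (F : ℝ → ℝ → ℝ) (hF : Continuous (Function.uncurry F)) (a b c d : ℝ) :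
    ∫ x in a..b, ∫ y in c..d, F x y = ∫ y in c..d, ∫ x in a..b, F x y := by
  apply intervalIntegral_intervalIntegral_swap
  exact (hF.continuousOn.integrableOn_compact (isCompact_uIcc.prod isCompact_uIcc)).mono_set
    (Set.prod_mono Set.uIoc_subset_uIcc Set.uIoc_subset_uIcc)

theorem symm_of_pde (M : ℝ × ℝ → ℝ) (hM : ContDiff ℝ 2 M)
    (hpde : ∀ x y, x * y * (fderiv ℝ (fun z => fderiv ℝ M z (1, 0)) (x, y) (1, 0)
        - fderiv ℝ (fun z => fderiv ℝ M z (0, 1)) (x, y) (0, 1))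
      = x * fderiv ℝ M (x, y) (0, 1) - y * fderiv ℝ M (x, y) (1, 0)) (x y : ℝ)
    (hx : 0 ≤ x) (hy : 0 ≤ y) : M (x, y) = M (y, x) := by
  have hMd := hM.differentiable two_ne_zero
  have h10 := fd_contDiff M hM (1, 0)
  have h01 := fd_contDiff M hM (0, 1)
  have hsw : ContDiff ℝ 1 (Prod.swap : ℝ × ℝ → ℝ × ℝ) := contDiff_snd.prodMk contDiff_fst
  have key : ∀ (p q : ℝ × ℝ → ℝ) (_ : Differentiable ℝ p) (_ : Differentiable ℝ q) (z v : ℝ × ℝ),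
      fderiv ℝ (fun z => p z - q z.swap) z v = fderiv ℝ p z v - fderiv ℝ q z.swap v.swap := by
    intro p q hp hq z v
    have h2 : HasFDerivAt (fun z : ℝ × ℝ => z.swap)
      ((ContinuousLinearMap.snd ℝ ℝ ℝ).prod (ContinuousLinearMap.fst ℝ ℝ ℝ)) z :=
      ((ContinuousLinearMap.snd ℝ ℝ ℝ).prod (ContinuousLinearMap.fst ℝ ℝ ℝ)).hasFDerivAt
    have h3 := (hp z).hasFDerivAt.sub ((hq z.swap).hasFDerivAt.comp z h2)
    have : fderiv ℝ (fun z => p z - q z.swap) z = _ := h3.fderiv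
    rw [this]
    rfl
  have hen := energy (fun z => M z - M z.swap)
    (hM.sub (hM.comp (contDiff_snd.prodMk contDiff_fst))) (fun x => by simp) (by
      intro x y
      simp only [key M M hMd hMd, Prod.swap_prod_mk]
      rw [key _ _ (h10.differentiable one_ne_zero) (h01.differentiable one_ne_zero),
        key _ _ (h01.differentiable one_ne_zero) (h10.differentiable one_ne_zero)]
      simp only [Prod.swap_prod_mk]
      linear_combination hpde x y + hpde y x)
  rcases le_total y x with h | h
  · have := hen x y hy h
    simp only [Prod.swap_prod_mk] at this
    linarith
  · have := hen y x hx h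
    simp only [Prod.swap_prod_mk] at this
    linarith

theorem curve_one {V : Type*} [NormedAddCommGroup V] [NormedSpace ℝ V]
    (f : V → ℝ) (hf : Differentiable ℝ f) (γ : ℝ → V) (d x : V) (hγ : HasDerivAt γ d 0)
    (h0 : γ 0 = x) : HasDerivAt (fun s => f (γ s)) (fderiv ℝ f x d) 0 := by
  subst h0
  exact (hf (γ 0)).hasFDerivAt.comp_hasDerivAt (0:ℝ) hγ

theorem curve_two {V : Type*} [NormedAddCommGroup V] [NormedSpace ℝ V]
    (f : V → ℝ) (hf : Differentiable ℝ (fderiv ℝ f)) (γ : ℝ → V) (d x : V) (hγ : HasDerivAt γ d 0)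
    (h0 : γ 0 = x) :
    HasDerivAt (fun s => fderiv ℝ f (γ s) d) (fderiv ℝ (fderiv ℝ f) x d d) 0 := by
  subst h0
  have := ((hf (γ 0)).hasFDerivAt.comp_hasDerivAt (0:ℝ) hγ).clm_apply (hasDerivAt_const (0:ℝ) d)
  refine HasDerivAt.congr_deriv this ?_
  simp

theorem asg_abstract {V : Type*} [NormedAddCommGroup V] [NormedSpace ℝ V]
    (f : V → ℝ) (hf : ContDiff ℝ 2 f) (a u₁ v₁ u₂ v₂ : V)
    (hlap : ∀ X, fderiv ℝ (fderiv ℝ f) X u₁ u₁ + fderiv ℝ (fderiv ℝ f) X v₁ v₁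
      = fderiv ℝ (fderiv ℝ f) X u₂ u₂ + fderiv ℝ (fderiv ℝ f) X v₂ v₂)
    (x y : ℝ) (hx : 0 ≤ x) (hy : 0 ≤ y) :
    ∫ t₂ in (0:ℝ)..(2*π), ∫ t₁ in (0:ℝ)..(2*π),
      f (a + x • (cos t₁ • u₁ + sin t₁ • v₁) + y • (cos t₂ • u₂ + sin t₂ • v₂))
    = ∫ t₂ in (0:ℝ)..(2*π), ∫ t₁ in (0:ℝ)..(2*π),
      f (a + y • (cos t₁ • u₁ + sin t₁ • v₁) + x • (cos t₂ • u₂ + sin t₂ • v₂)) := by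
  obtain ⟨e, he⟩ : ∃ e : ℝ → V, e = fun t => cos t • u₁ + sin t • v₁ := ⟨_, rfl⟩
  obtain ⟨h, hh⟩ : ∃ h : ℝ → V, h = fun t => cos t • u₂ + sin t • v₂ := ⟨_, rfl⟩
  have hec : ContDiff ℝ 2 e := by
    rw [he]; exact (contDiff_cos.smul contDiff_const).add (contDiff_sin.smul contDiff_const)
  have hhc : ContDiff ℝ 2 h := by
    rw [hh]; exact (contDiff_cos.smul contDiff_const).add (contDiff_sin.smul contDiff_const)
  have hex : ∀ t, cos t • u₁ + sin t • v₁ = e t := fun t => by rw [he]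
  have hhx : ∀ t, cos t • u₂ + sin t • v₂ = h t := fun t => by rw [hh]
  have c1 := fun b ρ => circ f hf b u₁ v₁ ρ
  have c2 := fun b ρ => circ f hf b u₂ v₂ ρ
  simp only [hex, hhx] at c1 c2 ⊢
  clear hex hhx he hh
  have hec0 := hec.continuous
  have hhc0 := hhc.continuous
  have h1 : ContDiff ℝ 1 (fderiv ℝ f) := hf.fderiv_right (by norm_num)
  have hc1 := h1.continuous
  have hc2 : Continuous (fderiv ℝ (fderiv ℝ f)) := h1.continuous_fderiv (by norm_num)
  obtain ⟨X, hX⟩ : ∃ X : ((ℝ × ℝ) × ℝ) × ℝ → V,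
    X = fun z => a + z.1.1.1 • e z.2 + z.1.1.2 • h z.1.2 := ⟨_, rfl⟩
  have hXc : ContDiff ℝ 2 X := by rw [hX]; fun_prop
  have hXline : ∀ (z : ((ℝ × ℝ) × ℝ) × ℝ) (α β : ℝ),
      HasDerivAt (fun s : ℝ => X (z + s • (((α, β), 0), 0))) (α • e z.2 + β • h z.1.2) 0 := by
    intro z α β
    have q1 : HasDerivAt (fun s : ℝ => z.1.1.1 + s * α) α 0 := by
      simpa using ((hasDerivAt_id (0:ℝ)).mul_const α).const_add z.1.1.1
    have q2 : HasDerivAt (fun s : ℝ => z.1.1.2 + s * β) β 0 := by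
      simpa using ((hasDerivAt_id (0:ℝ)).mul_const β).const_add z.1.1.2
    have := ((q1.smul_const (e z.2)).const_add a).add (q2.smul_const (h z.1.2))
    rw [hX]
    refine (HasDerivAt.congr_of_eventuallyEq this (Filter.Eventually.of_forall fun s => ?_))
    simp
  have hA : ContDiff ℝ 2 (fun z => f (X z)) := hf.comp hXc
  have hA1 : ContDiff ℝ 1 (fun z => f (X z)) := hA.of_le (by norm_num)
  have dA : ∀ z α β, fderiv ℝ (fun z => f (X z)) z (((α, β), 0), 0)
      = fderiv ℝ f (X z) (α • e z.2 + β • h z.1.2) := by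
    intro z α β
    refine fd_line _ _ _ (hA1.differentiable one_ne_zero z) _ ?_
    exact curve_one f (hf.differentiable two_ne_zero) _ _ _ (hXline z α β) (by simp)
  have ddA : ∀ z α β, fderiv ℝ (fun z => fderiv ℝ (fun z => f (X z)) z (((α, β), 0), 0)) z
        (((α, β), 0), 0)
      = fderiv ℝ (fderiv ℝ f) (X z) (α • e z.2 + β • h z.1.2) (α • e z.2 + β • h z.1.2) := by
    intro z α β
    refine fd_line _ _ _ ((fd_contDiff _ hA _).differentiable one_ne_zero z) _ ?_
    have := curve_two f (h1.differentiable one_ne_zero) _ _ _ (hXline z α β) (by simp : _ = X z)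
    refine (HasDerivAt.congr_of_eventuallyEq this (Filter.Eventually.of_forall fun s => ?_))
    dsimp only
    rw [dA]
    simp
  obtain ⟨M, hM⟩ : ∃ M : ℝ × ℝ → ℝ, M = fun z => ∫ t₂ in (0:ℝ)..(2*π), ∫ t₁ in (0:ℝ)..(2*π),
    f (X ((z, t₂), t₁)) := ⟨_, rfl⟩
  have hN := par_contDiff_two _ hA 0 (2*π)
  have hN1 := hN.of_le (show (1 : WithTop ℕ∞) ≤ 2 by norm_num)
  have hMc : ContDiff ℝ 2 M := by
    rw [hM]; exact par_contDiff_two _ hN 0 (2*π)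
  have dM : ∀ z v, fderiv ℝ M z v = ∫ t₂ in (0:ℝ)..(2*π), ∫ t₁ in (0:ℝ)..(2*π),
      fderiv ℝ (fun z => f (X z)) ((z, t₂), t₁) ((v, 0), 0) := by
    intro z v
    rw [hM, par_fderiv _ hN1]
    simp only [par_fderiv _ hA1]
  have ddM : ∀ z v, fderiv ℝ (fun z => fderiv ℝ M z v) z v
      = ∫ t₂ in (0:ℝ)..(2*π), ∫ t₁ in (0:ℝ)..(2*π),
      fderiv ℝ (fun z => fderiv ℝ (fun z => f (X z)) z ((v, 0), 0)) ((z, t₂), t₁) ((v, 0), 0) := by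
    intro z v
    simp only [dM]
    have hB := fd_contDiff _ hA ((v, 0), 0)
    rw [par_fderiv _ (par_contDiff_one _ hB 0 (2*π))]
    simp only [par_fderiv _ hB]
  have hfin := symm_of_pde M hMc (by
    intro x y
    rw [ddM, ddM, dM, dM]
    simp only [ddA]
    simp only [dA]
    simp only [one_smul, zero_smul, add_zero, zero_add, hX]
    have P1 : x * (∫ t₂ in (0:ℝ)..(2*π), ∫ t₁ in (0:ℝ)..(2*π),
          fderiv ℝ (fderiv ℝ f) (a + x • e t₁ + y • h t₂) (e t₁) (e t₁))
        + (∫ t₂ in (0:ℝ)..(2*π), ∫ t₁ in (0:ℝ)..(2*π),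
          fderiv ℝ f (a + x • e t₁ + y • h t₂) (e t₁))
        = x * ∫ t₂ in (0:ℝ)..(2*π), ∫ t₁ in (0:ℝ)..(2*π),
          (fderiv ℝ (fderiv ℝ f) (a + x • e t₁ + y • h t₂) u₁ u₁
          + fderiv ℝ (fderiv ℝ f) (a + x • e t₁ + y • h t₂) v₁ v₁) := by
      rw [← intervalIntegral.integral_const_mul, ← intervalIntegral.integral_const_mul,
        ← intervalIntegral.integral_add]
      · congr 1; ext t₂
        have := c1 (a + y • h t₂) x
        simp only [add_right_comm a (y • h t₂)] at this
        exact this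
      all_goals
        refine Continuous.intervalIntegrable ?_ _ _
        first | refine continuous_const.mul ?_ | skip
        refine continuous_parametric_intervalIntegral_of_continuous' ?_ _ _
        unfold Function.uncurry
        fun_prop
    have P2 : y * (∫ t₁ in (0:ℝ)..(2*π), ∫ t₂ in (0:ℝ)..(2*π),
          fderiv ℝ (fderiv ℝ f) (a + x • e t₁ + y • h t₂) (h t₂) (h t₂))
        + (∫ t₁ in (0:ℝ)..(2*π), ∫ t₂ in (0:ℝ)..(2*π),
          fderiv ℝ f (a + x • e t₁ + y • h t₂) (h t₂))
        = y * ∫ t₁ in (0:ℝ)..(2*π), ∫ t₂ in (0:ℝ)..(2*π),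
          (fderiv ℝ (fderiv ℝ f) (a + x • e t₁ + y • h t₂) u₂ u₂
          + fderiv ℝ (fderiv ℝ f) (a + x • e t₁ + y • h t₂) v₂ v₂) := by
      rw [← intervalIntegral.integral_const_mul, ← intervalIntegral.integral_const_mul,
        ← intervalIntegral.integral_add]
      · congr 1; ext t₁
        exact c2 (a + x • e t₁) y
      all_goals
        refine Continuous.intervalIntegrable ?_ _ _
        first | refine continuous_const.mul ?_ | skip
        refine continuous_parametric_intervalIntegral_of_continuous' ?_ _ _
        unfold Function.uncurry
        fun_prop
    simp only [hlap] at P1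
    rw [swap_int (fun t₁ t₂ => fderiv ℝ (fderiv ℝ f) (a + x • e t₁ + y • h t₂) (h t₂) (h t₂))
        (by unfold Function.uncurry; fun_prop),
      swap_int (fun t₁ t₂ => fderiv ℝ f (a + x • e t₁ + y • h t₂) (h t₂))
        (by unfold Function.uncurry; fun_prop),
      swap_int (fun t₁ t₂ => (fderiv ℝ (fderiv ℝ f) (a + x • e t₁ + y • h t₂) u₂ u₂
          + fderiv ℝ (fderiv ℝ f) (a + x • e t₁ + y • h t₂) v₂ v₂))
        (by unfold Function.uncurry; fun_prop)] at P2
    linear_combination y * P1 - x * P2) x y hx hy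
  rw [hM, hX] at hfin
  exact hfin

theorem second_line {V : Type*} [NormedAddCommGroup V] [NormedSpace ℝ V]
    (f : V → ℝ) (hf : ContDiff ℝ 2 f) (γ : ℝ → V) (d : V) (hγ : ∀ t, HasDerivAt γ d t) (t₀ : ℝ) :
    deriv (fun t => deriv (fun s => f (γ s)) t) t₀ = fderiv ℝ (fderiv ℝ f) (γ t₀) d d := by
  have h1 : ContDiff ℝ 1 (fderiv ℝ f) := hf.fderiv_right (by norm_num)
  have e1 : ∀ t, deriv (fun s => f (γ s)) t = fderiv ℝ f (γ t) d := fun t =>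
    ((hf.differentiable two_ne_zero (γ t)).hasFDerivAt.comp_hasDerivAt t (hγ t)).deriv
  simp only [e1]
  have := ((h1.differentiable one_ne_zero (γ t₀)).hasFDerivAt.comp_hasDerivAt t₀ (hγ t₀)).clm_apply
    (hasDerivAt_const t₀ d)
  refine (HasDerivAt.congr_deriv this ?_).deriv
  simp

/-- Asgeirsson's second theorem: if `r : ℝ⁴ → ℝ` is C² and satisfies the
ultrahyperbolic equation on all of `ℝ⁴`, then for every point and all radii
`R₁, R₂ ≥ 0` the double integral over the pair of circles of radii `(R₁, R₂)` in the
`(ξ₁,ξ₄)`- and `(ξ₂,ξ₃)`-planes equals the double integral with the radii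
interchanged. -/
theorem asgeirsson_second
    (r : ℝ → ℝ → ℝ → ℝ → ℝ)
    (hr : ContDiff ℝ 2 (fun p : ℝ × ℝ × ℝ × ℝ => r p.1 p.2.1 p.2.2.1 p.2.2.2))
    (huh : ∀ ξ₁ ξ₂ ξ₃ ξ₄ : ℝ,
      deriv (fun t => deriv (fun s => r s ξ₂ ξ₃ ξ₄) t) ξ₁
        - deriv (fun t => deriv (fun s => r ξ₁ s ξ₃ ξ₄) t) ξ₂
        - deriv (fun t => deriv (fun s => r ξ₁ ξ₂ s ξ₄) t) ξ₃
        + deriv (fun t => deriv (fun s => r ξ₁ ξ₂ ξ₃ s) t) ξ₄ = 0) :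
    ∀ (ξ₁ ξ₂ ξ₃ ξ₄ R₁ R₂ : ℝ), 0 ≤ R₁ → 0 ≤ R₂ →
      (∫ θ₂ in (0:ℝ)..(2 * π), ∫ θ₁ in (0:ℝ)..(2 * π),
          r (ξ₁ + R₁ * cos θ₁) (ξ₂ + R₂ * cos θ₂) (ξ₃ + R₂ * sin θ₂) (ξ₄ + R₁ * sin θ₁))
        = ∫ θ₂ in (0:ℝ)..(2 * π), ∫ θ₁ in (0:ℝ)..(2 * π),
            r (ξ₁ + R₂ * cos θ₁) (ξ₂ + R₁ * cos θ₂) (ξ₃ + R₁ * sin θ₂) (ξ₄ + R₂ * sin θ₁) := by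
  intro ξ₁ ξ₂ ξ₃ ξ₄ R₁ R₂ h₁ h₂
  have key := asg_abstract (fun p : ℝ × ℝ × ℝ × ℝ => r p.1 p.2.1 p.2.2.1 p.2.2.2) hr
    (ξ₁, ξ₂, ξ₃, ξ₄) (1, 0, 0, 0) (0, 0, 0, 1) (0, 1, 0, 0) (0, 0, 1, 0) (by
      rintro ⟨x₁, x₂, x₃, x₄⟩
      have e₁ := second_line _ hr (fun s => (s, x₂, x₃, x₄)) (1, 0, 0, 0) (fun t =>
        (hasDerivAt_id t).prodMk ((hasDerivAt_const t x₂).prodMk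
          ((hasDerivAt_const t x₃).prodMk (hasDerivAt_const t x₄)))) x₁
      have e₂ := second_line _ hr (fun s => (x₁, s, x₃, x₄)) (0, 1, 0, 0) (fun t =>
        (hasDerivAt_const t x₁).prodMk ((hasDerivAt_id t).prodMk
          ((hasDerivAt_const t x₃).prodMk (hasDerivAt_const t x₄)))) x₂
      have e₃ := second_line _ hr (fun s => (x₁, x₂, s, x₄)) (0, 0, 1, 0) (fun t =>
        (hasDerivAt_const t x₁).prodMk ((hasDerivAt_const t x₂).prodMk
          ((hasDerivAt_id t).prodMk (hasDerivAt_const t x₄)))) x₃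
      have e₄ := second_line _ hr (fun s => (x₁, x₂, x₃, s)) (0, 0, 0, 1) (fun t =>
        (hasDerivAt_const t x₁).prodMk ((hasDerivAt_const t x₂).prodMk
          ((hasDerivAt_const t x₃).prodMk (hasDerivAt_id t)))) x₄
      have := huh x₁ x₂ x₃ x₄
      dsimp only at e₁ e₂ e₃ e₄
      rw [e₁, e₂, e₃, e₄] at this
      linarith) R₁ R₂ h₁ h₂
  simpa using key
end
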